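/- For every Lagrangian subspace A of (⋀³V, σ) there exists a nonzero vector v ∈ V such that dim(A ∩ F_v) ≥ 2. (Equivalently: the locus W_A = {[v] ∈ ℙ(V) : dim(A ∩ F_v) ≥ 2} is never empty.) -/

import Mathlib

open ExteriorAlgebra

/-- The subspace `F_v = v ∧ ⋀²V = {v∧β : β ∈ ⋀²V}` of `⋀³V`, as a submodule of the
exterior algebra. -/
noncomputable def Fsub {V : Type*} [AddCommGroup V] [Module ℂ V] (v : V) :
    Submodule ℂ (ExteriorAlgebra ℂ V) :=
  (⋀[ℂ]^2 V).map (LinearMap.mulLeft ℂ (ExteriorAlgebra.ι ℂ v))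

/-!
Call a Lagrangian `A` good if `dim (A ∩ F_v) < 2` for every nonzero `v`. Since each `F_v` is
Lagrangian, failure to be good means that certain minors, homogeneous in `v`, have a nontrivial
common zero; by elimination theory, if `A` is good then so is `(1 + tN) A` for all but finitely
many scalars `t`, whatever the endomorphism `N`.

Fix `v₀ ≠ 0`. A symplectic transvection `x ↦ x + t σ(x, u) u` with `u` not orthogonal to `A ∩
F_{v₀}` strictly shrinks this intersection, so a good `A` can be moved to a good one transversal
to `F_{v₀}`. For such an `A` there is a commuting product `T_t` of two transvections such that
`T_{-1} A` meets `F_{v₀}` in a plane `v₀ ∧ ⟨β₁, β₂⟩`, where `(w, i, j) ↦ vol (v₀ ∧ βᵢ ∧ w ∧ βⱼ)`,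
the derivative of the position of `F_v` at `v₀`, maps `V` onto all symmetric forms on that plane.
By the inverse function theorem `T_t A` is then bad for every `t` near `-1`, so `A` is not good.
-/

section Elimination

open MvPolynomial

variable {σ ι R K : Type*} [CommRing R] [Field K]

attribute [local instance] MvPolynomial.gradedAlgebra

theorem exists_isHomogeneous_mem_map_eq {S : Type*} [CommRing S] {φ : R →+* S}
    (hφ : Function.Surjective φ) {J : Ideal (MvPolynomial σ R)}
    (hJ : J.IsHomogeneous (homogeneousSubmodule σ R)) {q : MvPolynomial σ S} {N : ℕ}
    (hq : q.IsHomogeneous N) (hqJ : q ∈ J.map (map φ)) :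
    ∃ g ∈ J, g.IsHomogeneous N ∧ map φ g = q := by
  classical
  obtain ⟨g, hg, hgq⟩ := (Ideal.mem_map_iff_of_surjective _ (map_surjective φ hφ)).1 hqJ
  refine ⟨homogeneousComponent N g, homogeneousComponent_mem_of_mem hJ hg N,
    homogeneousComponent_isHomogeneous N g, ?_⟩
  rw [← homogeneousComponent_eq_self hq, ← hgq]
  ext m
  simp only [coeff_map, coeff_homogeneousComponent, apply_ite φ, map_zero]

theorem mem_smul_homogeneousSubmodule {I : Ideal R} {p : MvPolynomial σ R} {N : ℕ}
    (hp : p.IsHomogeneous N) (hI : ∀ m, coeff m p ∈ I) :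
    p ∈ I • homogeneousSubmodule σ R N := by
  rw [← support_sum_monomial_coeff p]
  refine Submodule.sum_mem _ fun m hm => ?_
  rw [← mul_one (coeff m p), ← smul_eq_mul, ← smul_monomial]
  exact Submodule.smul_mem_smul (hI m)
    (isWeightedHomogeneous_monomial 1 m 1 (hp (mem_support_iff.1 hm)))

theorem exists_forall_isHomogeneous_mem [IsAlgClosed K] [Finite σ] {J : Ideal (MvPolynomial σ K)}
    (hJ : zeroLocus K J ⊆ {0}) : ∃ N : ℕ, ∀ p : MvPolynomial σ K, p.IsHomogeneous N → p ∈ J := by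
  have hX : Ideal.span (Set.range (X : σ → MvPolynomial σ K)) ≤ J.radical := by
    rw [Ideal.span_le, Set.range_subset_iff]
    intro i
    rw [← vanishingIdeal_zeroLocus_eq_radical (K := K)]
    intro x hx
    simp [Set.mem_singleton_iff.1 (hJ hx)]
  obtain ⟨N, hN⟩ := Ideal.exists_pow_le_of_le_radical_of_fg hX
    (Submodule.fg_span (Set.finite_range _))
  refine ⟨N, fun p hp => hN ?_⟩
  rw [Ideal.mem_span_pow_iff_exists_isHomogeneous]
  exact ⟨map C p, hp.map C, by rw [eval_map, eval₂_eta]⟩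

-- Nakayama's lemma in degree `N`: modulo the kernel of `φ`, every form of degree `N` lies in `J`.
theorem exists_smul_homogeneousSubmodule_le [IsAlgClosed K] [Finite σ] {φ : R →+* K}
    (hφ : Function.Surjective φ) {J : Ideal (MvPolynomial σ R)}
    (hJ : J.IsHomogeneous (homogeneousSubmodule σ R)) (hJφ : zeroLocus K (J.map (map φ)) ⊆ {0}) :
    ∃ (h : R) (N : ℕ), φ h = 1 ∧ ∀ p : MvPolynomial σ R, p.IsHomogeneous N → h • p ∈ J := by
  obtain ⟨N, hN⟩ := exists_forall_isHomogeneous_mem hJφ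
  have hle : homogeneousSubmodule σ R N ≤
      J.restrictScalars R ⊔ RingHom.ker φ • homogeneousSubmodule σ R N := by
    intro p (hp : p.IsHomogeneous N)
    obtain ⟨g, hgJ, hg, hgp⟩ :=
      exists_isHomogeneous_mem_map_eq hφ hJ (hp.map φ) (hN _ (hp.map φ))
    refine Submodule.mem_sup.2 ⟨g, hgJ, p - g, ?_, add_sub_cancel g p⟩
    refine mem_smul_homogeneousSubmodule (hp.sub hg) fun m => ?_
    rw [RingHom.mem_ker, ← coeff_map, map_sub, hgp, sub_self, coeff_zero]
  obtain ⟨h, hh, hhJ⟩ := Submodule.exists_sub_one_mem_and_smul_le_of_fg_of_le_sup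
    (homogeneousSubmodule_fg σ R N) le_rfl hle
  refine ⟨h, N, ?_, fun p hp => hhJ (Submodule.smul_mem_pointwise_smul p h _ hp)⟩
  rwa [RingHom.mem_ker, map_sub, map_one, sub_eq_zero] at hh

theorem exists_forall_common_zero_eq_zero [IsAlgClosed K] [Finite σ] {φ : R →+* K}
    (hφ : Function.Surjective φ) {F : ι → MvPolynomial σ R} {d : ι → ℕ}
    (hF : ∀ i, (F i).IsHomogeneous (d i))
    (h0 : ∀ x : σ → K, (∀ i, eval₂ φ x (F i) = 0) → x = 0) :
    ∃ h : R, φ h = 1 ∧ ∀ {L : Type*} [CommRing L] [IsDomain L] (ψ : R →+* L), ψ h ≠ 0 →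
      ∀ x : σ → L, (∀ i, eval₂ ψ x (F i) = 0) → x = 0 := by
  let J : Ideal (MvPolynomial σ R) := Ideal.span (Set.range F)
  have hJ : J.IsHomogeneous (homogeneousSubmodule σ R) :=
    Ideal.homogeneous_span _ _ (Set.forall_mem_range.2 fun i => ⟨d i, hF i⟩)
  have hJφ : zeroLocus K (J.map (map φ)) ⊆ {0} := fun x hx => h0 x fun i => by
    simpa only [aeval_eq_eval, eval_map] using
      hx _ (Ideal.mem_map_of_mem (map φ) (Ideal.subset_span ⟨i, rfl⟩))
  obtain ⟨h, N, hh, hhJ⟩ := exists_smul_homogeneousSubmodule_le hφ hJ hJφ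
  refine ⟨h, hh, fun ψ hψ x hx => funext fun j => ?_⟩
  have hJψ : J ≤ RingHom.ker (eval₂Hom ψ x) := Ideal.span_le.2 (Set.range_subset_iff.2 hx)
  have hXN : eval₂ ψ x (h • X j ^ N) = 0 := hJψ (hhJ _ (isHomogeneous_X_pow j N))
  rw [smul_eq_C_mul, eval₂_mul, eval₂_C, eval₂_pow, eval₂_X] at hXN
  exact eq_zero_of_pow_eq_zero ((mul_eq_zero.1 hXN).resolve_left hψ)

end Elimination

section Rank

open Filter

variable {K U A E W : Type*} [Field K] [AddCommGroup U] [Module K U] [AddCommGroup A] [Module K A]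
  [AddCommGroup E] [Module K E] [AddCommGroup W] [Module K W]

theorem le_finrank_range_iff_exists_det_ne_zero [FiniteDimensional K A] {k : ℕ} (f : A →ₗ[K] E) :
    k ≤ Module.finrank K (LinearMap.range f) ↔
      ∃ (Q : (Fin k → K) →ₗ[K] A) (P : E →ₗ[K] (Fin k → K)), LinearMap.det (P ∘ₗ f ∘ₗ Q) ≠ 0 := by
  constructor
  · intro hk
    obtain ⟨y, hy⟩ := exists_linearIndependent_of_le_finrank hk
    choose a ha using fun i => (y i).2
    have hfQ : f ∘ₗ Fintype.linearCombination K a =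
        (LinearMap.range f).subtype ∘ₗ Fintype.linearCombination K y := by
      ext i
      simp [ha]
    obtain ⟨P, hP⟩ := LinearMap.exists_leftInverse_of_injective
      (f ∘ₗ Fintype.linearCombination K a) <| LinearMap.ker_eq_bot.2 <| by
        rw [hfQ]
        exact (Submodule.subtype_injective _).comp hy.fintypeLinearCombination_injective
    exact ⟨_, P, by rw [hP, LinearMap.det_id]; exact one_ne_zero⟩
  · rintro ⟨Q, P, hdet⟩
    have hker : LinearMap.ker (P ∘ₗ f ∘ₗ Q) = ⊥ :=
      not_not.1 fun h => hdet (LinearMap.det_eq_zero_iff_ker_ne_bot.2 h)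
    have hinj : Function.Injective (f.rangeRestrict ∘ₗ Q) := fun x y hxy =>
      LinearMap.ker_eq_bot.1 hker (congrArg P (congrArg Subtype.val hxy))
    simpa using LinearMap.finrank_le_finrank_of_injective hinj

open MvPolynomial in
theorem isHomogeneous_det {σ R κ : Type*} [CommRing R] [Fintype κ] [DecidableEq κ]
    {M : Matrix κ κ (MvPolynomial σ R)} (hM : ∀ i j, (M i j).IsHomogeneous 1) :
    M.det.IsHomogeneous (Fintype.card κ) := by
  rw [Matrix.det_apply']
  refine IsHomogeneous.sum _ _ _ fun τ _ => ?_
  have hprod : (∏ i, M (τ i) i).IsHomogeneous (∑ _ : κ, 1) :=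
    IsHomogeneous.prod _ _ _ fun i _ => hM (τ i) i
  rw [← map_intCast (C : R →+* _)]
  simpa only [Finset.sum_const, Finset.card_univ, smul_eq_mul, mul_one] using hprod.C_mul _

open MvPolynomial in
theorem exists_isHomogeneous_eval₂_eq_det {ι κ : Type*} [Finite ι] [Fintype κ]
    (b : Module.Basis ι K U) (Φ Ψ : U →ₗ[K] A →ₗ[K] E) (Q : (κ → K) →ₗ[K] A)
    (P : E →ₗ[K] (κ → K)) :
    ∃ F : MvPolynomial ι (Polynomial K), F.IsHomogeneous (Fintype.card κ) ∧
      ∀ t x, eval₂ (Polynomial.evalRingHom t) x F =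
        LinearMap.det (P ∘ₗ (Φ + t • Ψ) (b.equivFun.symm x) ∘ₗ Q) := by
  classical
  have := Fintype.ofFinite ι
  let M : Matrix κ κ (MvPolynomial ι (Polynomial K)) := Matrix.of fun r c =>
    ∑ i, C (Polynomial.C (LinearMap.toMatrix' (P ∘ₗ Φ (b i) ∘ₗ Q) r c) +
      Polynomial.X * Polynomial.C (LinearMap.toMatrix' (P ∘ₗ Ψ (b i) ∘ₗ Q) r c)) * X i
  refine ⟨M.det, isHomogeneous_det fun r c => IsHomogeneous.sum _ _ _ fun i _ =>
    isHomogeneous_C_mul_X _ _, fun t x => ?_⟩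
  rw [← coe_eval₂Hom, RingHom.map_det, ← LinearMap.det_toMatrix']
  congr 1
  ext r c
  simp only [M, RingHom.mapMatrix_apply, Matrix.map_apply, Matrix.of_apply, coe_eval₂Hom,
    eval₂_sum, eval₂_mul, eval₂_C, eval₂_X, Polynomial.coe_evalRingHom, Polynomial.eval_add,
    Polynomial.eval_mul, Polynomial.eval_C, Polynomial.eval_X]
  simp only [Module.Basis.equivFun_symm_apply, map_sum, map_smul, LinearMap.toMatrix'_apply,
    LinearMap.comp_apply, LinearMap.sum_apply, LinearMap.smul_apply, LinearMap.add_apply, map_add,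
    Finset.sum_apply, Pi.smul_apply, Pi.add_apply, smul_eq_mul, mul_comm]

theorem eventually_forall_le_finrank_range [IsAlgClosed K] [FiniteDimensional K U]
    [FiniteDimensional K A] {k : ℕ} {Φ Ψ : U →ₗ[K] A →ₗ[K] E}
    (hΦ : ∀ u ≠ 0, k ≤ Module.finrank K (LinearMap.range (Φ u))) :
    ∀ᶠ t : K in cofinite, ∀ u ≠ 0, k ≤ Module.finrank K (LinearMap.range ((Φ + t • Ψ) u)) := by
  let b := Module.finBasis K U
  choose F hF hFeval using fun p : ((Fin k → K) →ₗ[K] A) × (E →ₗ[K] (Fin k → K)) =>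
    exists_isHomogeneous_eval₂_eq_det b Φ Ψ p.1 p.2
  have hzero (t : K) (u : U) :
      (∀ p, (F p).eval₂ (Polynomial.evalRingHom t) (b.equivFun u) = 0) ↔
        ¬ k ≤ Module.finrank K (LinearMap.range ((Φ + t • Ψ) u)) := by
    simp only [le_finrank_range_iff_exists_det_ne_zero, hFeval, Prod.forall,
      LinearEquiv.symm_apply_apply, not_exists, not_not]
  obtain ⟨h, h0, hh⟩ := exists_forall_common_zero_eq_zero (φ := Polynomial.evalRingHom (0 : K))
    (fun a => ⟨Polynomial.C a, Polynomial.eval_C⟩) hF <| by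
      intro x hx
      obtain ⟨u, rfl⟩ := b.equivFun.surjective x
      rw [hzero, zero_smul, add_zero] at hx
      exact (map_eq_zero_iff _ b.equivFun.injective).2 (not_not.1 fun hu => hx (hΦ u hu))
  have hne : h ≠ 0 := by
    rintro rfl
    simp at h0
  filter_upwards [(Polynomial.finite_setOfPred_isRoot hne).compl_mem_cofinite] with t ht u
  contrapose
  intro hu
  exact (map_eq_zero_iff _ b.equivFun.injective).1
    (hh (Polynomial.evalRingHom t) ht _ ((hzero t u).2 hu))

theorem eventually_forall_finrank_map_inf_ker_lt [IsAlgClosed K] [FiniteDimensional K U]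
    {A : Submodule K W} [FiniteDimensional K A] {N : W →ₗ[K] W} {Ψ : U →ₗ[K] W →ₗ[K] E} {r : ℕ}
    (hA : ∀ u ≠ 0, Module.finrank K ↥(A ⊓ LinearMap.ker (Ψ u)) < r) :
    ∀ᶠ t : K in cofinite, ∀ u ≠ 0,
      Module.finrank K ↥(A.map (LinearMap.id + t • N) ⊓ LinearMap.ker (Ψ u)) < r := by
  have hle (T : W →ₗ[K] W) (u : U) :
      Module.finrank K ↥(A.map T ⊓ LinearMap.ker (Ψ u)) ≤
        Module.finrank K (LinearMap.ker (Ψ u ∘ₗ T.domRestrict A)) := by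
    rw [← LinearMap.range_domRestrict, LinearMap.ker_comp, ← Submodule.map_comap_eq]
    exact Submodule.finrank_map_le _ _
  have hrank : ∀ u ≠ 0, Module.finrank K A + 1 - r ≤
      Module.finrank K (LinearMap.range (Ψ.compl₂ A.subtype u)) := by
    intro u hu
    have hker : Module.finrank K (LinearMap.ker (Ψ.compl₂ A.subtype u)) < r := by
      have := hA u hu
      rwa [← Submodule.map_comap_subtype, Submodule.finrank_map_subtype_eq] at this
    have := LinearMap.finrank_range_add_finrank_ker (Ψ.compl₂ A.subtype u)
    omega
  filter_upwards [eventually_forall_le_finrank_range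
    (Ψ := Ψ.compl₂ (N ∘ₗ A.subtype)) hrank] with t ht u hu
  have hcomp : (Ψ.compl₂ A.subtype + t • Ψ.compl₂ (N ∘ₗ A.subtype)) u =
      Ψ u ∘ₗ (LinearMap.id + t • N).domRestrict A := by
    ext a
    simp
  have hrank_t := ht u hu
  rw [hcomp] at hrank_t
  have := LinearMap.finrank_range_add_finrank_ker (Ψ u ∘ₗ (LinearMap.id + t • N).domRestrict A)
  have := hle (LinearMap.id + t • N) u
  omega

end Rank

section InverseFunction

open Filter Topology

variable {𝕜 E F G : Type*} [NontriviallyNormedField 𝕜] [CompleteSpace 𝕜]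

theorem eventually_nhds_exists_apply₂_eq [NormedAddCommGroup E] [NormedSpace 𝕜 E]
    [FiniteDimensional 𝕜 E] [NormedAddCommGroup F] [NormedSpace 𝕜 F] [FiniteDimensional 𝕜 F]
    [NormedAddCommGroup G] [NormedSpace 𝕜 G] [FiniteDimensional 𝕜 G] {B : E →ₗ[𝕜] F →ₗ[𝕜] G}
    {e : E} {f : F} (hB : ∀ g, ∃ w γ, B e γ + B w f = g) :
    ∀ᶠ g in 𝓝 (B e f), ∃ w γ, B w γ = g := by
  have := FiniteDimensional.complete 𝕜 E
  have := FiniteDimensional.complete 𝕜 F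
  have := FiniteDimensional.complete 𝕜 G
  have hderiv := B.toContinuousBilinearMap.hasStrictFDerivAt_of_bilinear
    (hasStrictFDerivAt_fst (p := (e, f))) hasStrictFDerivAt_snd
  have hmap := hderiv.map_nhds_eq_of_surj <| LinearMap.range_eq_top.2 fun g => by
    obtain ⟨w, γ, rfl⟩ := hB g
    exact ⟨(w, γ), by simp⟩
  change map _ _ = 𝓝 (B e f) at hmap
  rw [← hmap, eventually_map]
  exact Eventually.of_forall fun z => ⟨z.1, z.2, rfl⟩

theorem eventually_nhds_exists_apply₂_eq_add_smul [AddCommGroup E] [Module 𝕜 E]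
    [FiniteDimensional 𝕜 E] [AddCommGroup F] [Module 𝕜 F] [FiniteDimensional 𝕜 F]
    [AddCommGroup G] [Module 𝕜 G] [FiniteDimensional 𝕜 G] {B : E →ₗ[𝕜] F →ₗ[𝕜] G}
    {e : E} {f : F} (hB : ∀ g, ∃ w γ, B e γ + B w f = g) (g : G) :
    ∀ᶠ c in 𝓝 (0 : 𝕜), ∃ w γ, B w γ = B e f + c • g := by
  let eE := (Module.finBasis 𝕜 E).equivFun
  let eF := (Module.finBasis 𝕜 F).equivFun
  let eG := (Module.finBasis 𝕜 G).equivFun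
  let : NormedAddCommGroup E := .induced E _ eE eE.injective
  let : NormedSpace 𝕜 E := .induced 𝕜 E _ eE
  let : NormedAddCommGroup F := .induced F _ eF eF.injective
  let : NormedSpace 𝕜 F := .induced 𝕜 F _ eF
  let : NormedAddCommGroup G := .induced G _ eG eG.injective
  let : NormedSpace 𝕜 G := .induced 𝕜 G _ eG
  have htendsto : Tendsto (fun c : 𝕜 => B e f + c • g) (𝓝 0) (𝓝 (B e f)) := by
    have : Continuous fun c : 𝕜 => B e f + c • g := by fun_prop
    simpa using this.tendsto 0
  exact htendsto.eventually (eventually_nhds_exists_apply₂_eq hB)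

end InverseFunction

section Lagrangian

variable {K ι W : Type*} [Field K] [AddCommGroup W] [Module K W] {σ : LinearMap.BilinForm K W}
  {A F L : Submodule K W}

/-- A Lagrangian subspace for the bilinear form `σ`, encoded as being equal to its own
orthogonal. -/
def IsLagrangian (σ : LinearMap.BilinForm K W) (L : Submodule K W) : Prop :=
  σ.orthogonal L = L

theorem IsLagrangian.mem_iff (hL : IsLagrangian σ L) {x : W} : x ∈ L ↔ ∀ y ∈ L, σ y x = 0 := by
  rw [← LinearMap.BilinForm.mem_orthogonal_iff, hL]

theorem IsLagrangian.apply_eq_zero (hL : IsLagrangian σ L) {x y : W} (hx : x ∈ L) (hy : y ∈ L) :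
    σ x y = 0 :=
  hL.mem_iff.1 hy x hx

theorem isLagrangian_of_two_mul_finrank_eq [FiniteDimensional K W] (hσ : σ.Nondegenerate)
    (hL : ∀ x ∈ L, ∀ y ∈ L, σ x y = 0) (hdim : 2 * Module.finrank K L = Module.finrank K W) :
    IsLagrangian σ L := by
  have hle : L ≤ σ.orthogonal L := fun y hy x hx => hL x hx y hy
  refine (Submodule.eq_of_le_of_finrank_eq hle ?_).symm
  rw [LinearMap.BilinForm.finrank_orthogonal hσ]
  omega

theorem IsLagrangian.two_mul_finrank [FiniteDimensional K W] (hL : IsLagrangian σ L)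
    (hσ : σ.Nondegenerate) : 2 * Module.finrank K L = Module.finrank K W := by
  have horth := LinearMap.BilinForm.finrank_orthogonal hσ L
  rw [hL] at horth
  have hle := L.finrank_le
  omega

theorem IsLagrangian.map [FiniteDimensional K W] (hL : IsLagrangian σ L) (hσ : σ.Nondegenerate)
    {T : W →ₗ[K] W} (hT : ∀ x y, σ (T x) (T y) = σ x y) : IsLagrangian σ (L.map T) := by
  have hinj : Function.Injective T := (injective_iff_map_eq_zero T).2 fun x hx =>
    hσ.1 x fun y => by rw [← hT, hx, map_zero, LinearMap.zero_apply]
  refine isLagrangian_of_two_mul_finrank_eq hσ ?_ ?_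
  · rintro _ ⟨x, hx, rfl⟩ _ ⟨y, hy, rfl⟩
    rw [hT, hL.apply_eq_zero hx hy]
  · rw [← (L.equivMapOfInjective T hinj).finrank_eq, hL.two_mul_finrank hσ]

theorem IsLagrangian.isCompl [FiniteDimensional K W] (hA : IsLagrangian σ A)
    (hF : IsLagrangian σ F) (hσ : σ.Nondegenerate) (hAF : Disjoint A F) : IsCompl A F := by
  refine ⟨hAF, codisjoint_iff.2 (Submodule.eq_top_of_disjoint A F ?_ hAF)⟩
  have hA := hA.two_mul_finrank hσ
  have hF := hF.two_mul_finrank hσ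
  omega

section Shear

variable [Fintype ι] {u : ι → W}

/-- The map `x ↦ x + t ∑ i, σ(x, u i) u i`; for pairwise `σ`-orthogonal `u i` it is a product of
commuting symplectic transvections. -/
def shear (σ : LinearMap.BilinForm K W) (u : ι → W) (t : K) : W →ₗ[K] W :=
  LinearMap.id + t • ∑ i, (σ.flip (u i)).smulRight (u i)

theorem shear_apply (t : K) (x : W) : shear σ u t x = x + t • ∑ i, σ x (u i) • u i := by
  simp [shear, LinearMap.sum_apply]

theorem apply_shear_shear (hσ : σ.IsAlt) (hu : ∀ i j, σ (u i) (u j) = 0) (t : K)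
    (x y : W) : σ (shear σ u t x) (shear σ u t y) = σ x y := by
  have hskew : ∑ i, σ y (u i) * σ x (u i) = -∑ i, σ x (u i) * σ (u i) y := by
    rw [← Finset.sum_neg_distrib]
    exact Finset.sum_congr rfl fun i _ => by rw [← hσ.neg_eq y]; ring
  simp only [shear_apply, map_add, map_smul, map_sum, LinearMap.add_apply, LinearMap.smul_apply,
    LinearMap.sum_apply, hu, smul_eq_mul, mul_zero, Finset.sum_const_zero, add_zero, hskew]
  ring

theorem exists_map_shear_inf_lt (hnd : σ.Nondegenerate)
    (hA : ∀ x ∈ A, ∀ y ∈ A, σ x y = 0) (hF : ∀ x ∈ F, ∀ y ∈ F, σ x y = 0) (hAF : ¬Disjoint A F) :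
    ∃ u : W, ∀ t : K, t ≠ 0 →
      A.map (shear σ (fun _ : Unit => u) t) ⊓ F < A ⊓ F := by
  obtain ⟨d, ⟨hdA, hdF⟩, hd⟩ := Submodule.exists_mem_ne_zero_of_ne_bot (disjoint_iff.not.1 hAF)
  obtain ⟨u, hdu⟩ : ∃ u, σ d u ≠ 0 := by
    by_contra! h
    exact hd (hnd.1 d h)
  refine ⟨u, fun t ht => ?_⟩
  have hT (x : W) : shear σ (fun _ : Unit => u) t x =
      x + t • σ x u • u := by simp [shear_apply]
  have hfix : ∀ a ∈ A, a + t • σ a u • u ∈ F → σ a u = 0 := by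
    intro a ha haF
    have := hF d hdF _ haF
    simpa [hA d hdA a ha, ht, hdu] using this
  refine lt_of_le_of_ne ?_ fun heq => ?_
  · rintro _ ⟨⟨a, ha, rfl⟩, haF⟩
    rw [hT] at haF ⊢
    have hau : σ a u = 0 := hfix a ha haF
    rw [hau, zero_smul, smul_zero, add_zero] at haF ⊢
    exact ⟨ha, haF⟩
  · obtain ⟨⟨a, ha, had⟩, -⟩ := heq.ge ⟨hdA, hdF⟩
    rw [hT] at had
    have hau : σ a u = 0 := hfix a ha (had ▸ hdF)
    rw [hau, zero_smul, smul_zero, add_zero] at had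
    exact hdu (had ▸ hau)

theorem card_le_finrank_map_shear_inf [FiniteDimensional K W] [DecidableEq ι] (hσ : σ.IsAlt)
    (hu : ∀ i j, σ (u i) (u j) = 0) {x : ι → W} (hxF : ∀ j, x j ∈ F) (hxA : ∀ j, x j - u j ∈ A)
    {t : K} (hux : ∀ i j, t * σ (u i) (x j) = if i = j then -1 else 0) :
    Fintype.card ι ≤ Module.finrank K ↥(A.map (shear σ u t) ⊓ F) := by
  have hT (j : ι) : shear σ u t (x j - u j) = x j := by
    have hcoeff (i : ι) : t * σ (x j - u j) (u i) = if i = j then 1 else 0 := by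
      have := hux i j
      rw [map_sub, LinearMap.sub_apply, hu, sub_zero, ← hσ.neg_eq, mul_neg, this]
      split_ifs <;> simp
    simp [shear_apply, Finset.smul_sum, smul_smul, hcoeff, -map_sub]
  have hmem (j : ι) : x j ∈ A.map (shear σ u t) ⊓ F :=
    ⟨⟨_, hxA j, hT j⟩, hxF j⟩
  have hindep : LinearIndependent K x := by
    rw [Fintype.linearIndependent_iff]
    intro c hc i
    have := congrArg (t * σ (u i) ·) hc
    simpa [Finset.mul_sum, mul_left_comm t, hux] using this
  have hindep' : LinearIndependent K fun j => (⟨x j, hmem j⟩ : ↥(_ ⊓ F)) :=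
    LinearIndependent.of_comp (Submodule.subtype _) hindep
  exact hindep'.fintype_card_le_finrank

end Shear

end Lagrangian

section LagrangianFamily

open Filter Topology

variable {𝕜 ι V X W : Type*} [AddCommGroup V] [AddCommGroup X] [AddCommGroup W]

section Field

variable [Field 𝕜] [Module 𝕜 V] [Module 𝕜 X] [Module 𝕜 W] {σ : LinearMap.BilinForm 𝕜 W}
  {m : V →ₗ[𝕜] X →ₗ[𝕜] W} {A : Submodule 𝕜 W}

theorem apply_apply_swap_of_isLagrangian (hσ : σ.IsAlt)
    (hm : ∀ v ≠ 0, IsLagrangian σ (LinearMap.range (m v))) (v w : V) (β γ : X) :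
    σ (m v β) (m w γ) = σ (m v γ) (m w β) := by
  have hiso (v : V) (β γ : X) : σ (m v β) (m v γ) = 0 := by
    rcases eq_or_ne v 0 with rfl | hv
    · simp
    · exact (hm v hv).apply_eq_zero ⟨β, rfl⟩ ⟨γ, rfl⟩
  have h := hiso (v + w) β γ
  simp only [map_add, LinearMap.add_apply, hiso] at h
  have hneg := hσ.neg_eq (m v γ) (m w β)
  linear_combination h + hneg

theorem eventually_forall_finrank_map_inf_range_lt [IsAlgClosed 𝕜] [FiniteDimensional 𝕜 V]
    [FiniteDimensional 𝕜 W] (hm : ∀ v ≠ 0, IsLagrangian σ (LinearMap.range (m v))) {N : W →ₗ[𝕜] W}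
    {r : ℕ} (hA : ∀ v ≠ 0, Module.finrank 𝕜 ↥(A ⊓ LinearMap.range (m v)) < r) :
    ∀ᶠ t : 𝕜 in cofinite, ∀ v ≠ 0,
      Module.finrank 𝕜 ↥(A.map (LinearMap.id + t • N) ⊓ LinearMap.range (m v)) < r := by
  let Ψ : V →ₗ[𝕜] W →ₗ[𝕜] X →ₗ[𝕜] 𝕜 := LinearMap.lflip.toLinearMap ∘ₗ m.compr₂ σ
  have hker : ∀ v ≠ 0, LinearMap.ker (Ψ v) = LinearMap.range (m v) := by
    intro v hv
    ext x
    rw [(hm v hv).mem_iff, LinearMap.mem_ker, LinearMap.ext_iff]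
    simp [Ψ]
  filter_upwards [eventually_forall_finrank_map_inf_ker_lt (A := A) (N := N) (Ψ := Ψ) (r := r)
    fun v hv => by rw [hker v hv]; exact hA v hv] with t ht v hv
  rw [← hker v hv]
  exact ht v hv

variable [LinearOrder ι] {v₀ : V} {β : ι → X}

theorem exists_dual_family_of_codisjoint (hσ : σ.IsAlt)
    (hm : ∀ v ≠ 0, IsLagrangian σ (LinearMap.range (m v))) (hv₀ : v₀ ≠ 0)
    (hcod : Codisjoint A (LinearMap.range (m v₀)))
    (hβ : ∀ S : ι → ι → 𝕜, ∃ w, ∀ i j, i ≤ j → σ (m v₀ (β i)) (m w (β j)) = S i j) :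
    ∃ a : ι → W, (∀ i, a i ∈ A) ∧ ∀ i j, σ (a i) (m v₀ (β j)) = if i = j then 1 else 0 := by
  obtain ⟨w, hw⟩ := hβ fun i j => if i = j then -1 else 0
  have hw' (i j : ι) : σ (m v₀ (β i)) (m w (β j)) = if i = j then -1 else 0 := by
    rcases le_total i j with hij | hji
    · exact hw i j hij
    · rw [apply_apply_swap_of_isLagrangian hσ hm, hw j i hji]
      simp only [eq_comm]
  choose a ha f hf haf using fun j =>
    Submodule.mem_sup.1 (hcod.eq_top.ge (Submodule.mem_top (x := m w (β j))))
  refine ⟨a, ha, fun i j => ?_⟩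
  have hfj : σ (m v₀ (β j)) (f i) = 0 := (hm v₀ hv₀).apply_eq_zero ⟨_, rfl⟩ (hf i)
  have haj : σ (m v₀ (β j)) (a i) = if i = j then -1 else 0 := by
    have hji := hw' j i
    rw [← haf i, map_add, hfj, add_zero] at hji
    rw [hji]
    simp only [eq_comm]
  rw [← hσ.neg_eq, haj]
  split_ifs <;> simp

/-- For `u : ι → W`, the bilinear map sending `(v, b)` to the classes of the `m v (b j)` in `W ⧸ A`
and the numbers `σ (u i) (m v (b j))`, `i ≤ j`. Its fibres parametrize the points `x j = m v (b j)`
of a single `range (m v)` with prescribed position relative to `A` and prescribed pairings with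
`u`. -/
def positionMap (σ : LinearMap.BilinForm 𝕜 W) (m : V →ₗ[𝕜] X →ₗ[𝕜] W) (A : Submodule 𝕜 W)
    (u : ι → W) : V →ₗ[𝕜] (ι → X) →ₗ[𝕜] (ι → W ⧸ A) × ({p : ι × ι // p.1 ≤ p.2} → 𝕜) :=
  LinearMap.mk₂ 𝕜
    (fun v b => (fun j => A.mkQ (m v (b j)), fun p => σ (u p.1.1) (m v (b p.1.2))))
    (fun _ _ _ => by ext <;> simp) (fun _ _ _ => by ext <;> simp)
    (fun _ _ _ => by ext <;> simp) (fun _ _ _ => by ext <;> simp)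

theorem exists_positionMap_add_eq (hm : ∀ v ≠ 0, IsLagrangian σ (LinearMap.range (m v)))
    (hv₀ : v₀ ≠ 0) (hA : ∀ x ∈ A, ∀ y ∈ A, σ x y = 0)
    (hcod : Codisjoint A (LinearMap.range (m v₀)))
    (hβ : ∀ S : ι → ι → 𝕜, ∃ w, ∀ i j, i ≤ j → σ (m v₀ (β i)) (m w (β j)) = S i j)
    {a : ι → W} (ha : ∀ i, a i ∈ A) (g) :
    ∃ w γ, positionMap σ m A (fun i => a i + m v₀ (β i)) v₀ γ +
      positionMap σ m A (fun i => a i + m v₀ (β i)) w β = g := by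
  obtain ⟨q, s⟩ := g
  choose y hy using fun j => A.mkQ_surjective (q j)
  obtain ⟨w, hw⟩ := hβ fun i j => if h : i ≤ j then s ⟨(i, j), h⟩ - σ (a i) (y j) else 0
  choose a' ha' f hf haf using fun j =>
    Submodule.mem_sup.1 (hcod.eq_top.ge (Submodule.mem_top (x := m w (β j) - y j)))
  choose γ hγ using hf
  have hz (j : ι) : m v₀ (-γ j) + m w (β j) = y j + a' j := by
    rw [map_neg, hγ, ← sub_add_cancel (m w (β j)) (y j), ← haf]
    abel
  refine ⟨w, -γ, Prod.ext (funext fun j => ?_) (funext fun p => ?_)⟩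
  · change A.mkQ (m v₀ (-γ j)) + A.mkQ (m w (β j)) = q j
    rw [← map_add, hz, map_add, hy, Submodule.mkQ_apply,
      (Submodule.Quotient.mk_eq_zero A).2 (ha' j), add_zero]
  · obtain ⟨⟨i, j⟩, hij : i ≤ j⟩ := p
    have hfγ : σ (m v₀ (β i)) (m v₀ (-γ j)) = 0 :=
      (hm v₀ hv₀).apply_eq_zero ⟨_, rfl⟩ ⟨_, rfl⟩
    change σ (a i + m v₀ (β i)) (m v₀ (-γ j)) + σ (a i + m v₀ (β i)) (m w (β j)) = s ⟨(i, j), hij⟩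
    calc _ = σ (a i) (m v₀ (-γ j) + m w (β j)) + σ (m v₀ (β i)) (m v₀ (-γ j))
            + σ (m v₀ (β i)) (m w (β j)) := by
          simp only [map_add, LinearMap.add_apply]; ring
      _ = s ⟨(i, j), hij⟩ := by
          rw [hz, map_add, hA _ (ha i) _ (ha' j), hfγ, hw i j hij, dif_pos hij]; ring

theorem exists_shear_family_of_codisjoint (hσ : σ.IsAlt)
    (hm : ∀ v ≠ 0, IsLagrangian σ (LinearMap.range (m v))) (hv₀ : v₀ ≠ 0)
    (hA : ∀ x ∈ A, ∀ y ∈ A, σ x y = 0) (hcod : Codisjoint A (LinearMap.range (m v₀)))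
    (hβ : ∀ S : ι → ι → 𝕜, ∃ w, ∀ i j, i ≤ j → σ (m v₀ (β i)) (m w (β j)) = S i j) :
    ∃ a : ι → W, (∀ i, a i ∈ A) ∧
      (∀ i j, σ (a i + m v₀ (β i)) (a j + m v₀ (β j)) = 0) ∧
      ∀ i j, σ (a i + m v₀ (β i)) (m v₀ (β j)) = if i = j then 1 else 0 := by
  obtain ⟨a, ha, hdual⟩ := exists_dual_family_of_codisjoint hσ hm hv₀ hcod hβ
  have hiso (i j : ι) : σ (m v₀ (β i)) (m v₀ (β j)) = 0 :=
    (hm v₀ hv₀).apply_eq_zero ⟨_, rfl⟩ ⟨_, rfl⟩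
  refine ⟨a, ha, fun i j => ?_, fun i j => ?_⟩
  · have hskew := hσ.neg_eq (a j) (m v₀ (β i))
    simp only [map_add, LinearMap.add_apply, hA _ (ha i) _ (ha j), hiso, ← hskew, hdual]
    simp [eq_comm]
  · simp only [map_add, LinearMap.add_apply, hiso, hdual, add_zero]

theorem apply_eq_of_positionMap_eq (hσ : σ.IsAlt) (hA : ∀ x ∈ A, ∀ y ∈ A, σ x y = 0) {u : ι → W}
    (hu : ∀ i j, σ (u i) (u j) = 0) {v : V} {b : ι → X}
    (hv : ∀ i j, σ (m v (b i)) (m v (b j)) = 0) {c : 𝕜}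
    (hpos : positionMap σ m A u v b =
      (fun j => A.mkQ (u j), fun p => if p.1.1 = p.1.2 then c else 0)) :
    (∀ j, m v (b j) - u j ∈ A) ∧
      ∀ i j, σ (u i) (m v (b j)) = if i = j then c else 0 := by
  have hsub (j : ι) : m v (b j) - u j ∈ A :=
    (Submodule.Quotient.eq A).1 (congrFun (congrArg Prod.fst hpos) j)
  have hle (i j : ι) (hij : i ≤ j) : σ (u i) (m v (b j)) = if i = j then c else 0 :=
    congrFun (congrArg Prod.snd hpos) ⟨(i, j), hij⟩
  refine ⟨hsub, fun i j => ?_⟩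
  rcases le_total i j with hij | hji
  · exact hle i j hij
  · have hsymm : σ (u i) (m v (b j)) = σ (u j) (m v (b i)) := by
      have h := hA _ (hsub i) _ (hsub j)
      have hskew := hσ.neg_eq (m v (b i)) (u j)
      simp only [map_sub, LinearMap.sub_apply, hv, hu] at h
      linear_combination hskew - h
    rw [hsymm, hle j i hji]
    simp only [eq_comm]

end Field

section NontriviallyNormedField

variable [NontriviallyNormedField 𝕜] [CompleteSpace 𝕜] [Module 𝕜 V] [Module 𝕜 X] [Module 𝕜 W]
  [FiniteDimensional 𝕜 V] [FiniteDimensional 𝕜 X] [FiniteDimensional 𝕜 W] [Fintype ι]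
  [LinearOrder ι] [Nonempty ι] {σ : LinearMap.BilinForm 𝕜 W} {m : V →ₗ[𝕜] X →ₗ[𝕜] W}
  {A : Submodule 𝕜 W} {v₀ : V} {β : ι → X}

theorem exists_eventually_card_le_finrank_map_shear_inf (hσ : σ.IsAlt)
    (hm : ∀ v ≠ 0, IsLagrangian σ (LinearMap.range (m v))) (hv₀ : v₀ ≠ 0)
    (hA : ∀ x ∈ A, ∀ y ∈ A, σ x y = 0) (hcod : Codisjoint A (LinearMap.range (m v₀)))
    (hβ : ∀ S : ι → ι → 𝕜, ∃ w, ∀ i j, i ≤ j → σ (m v₀ (β i)) (m w (β j)) = S i j) :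
    ∃ u : ι → W, ∀ᶠ t : 𝕜 in 𝓝 (-1), ∃ v ≠ 0,
      Fintype.card ι ≤ Module.finrank 𝕜 ↥(A.map (shear σ u t) ⊓ LinearMap.range (m v)) := by
  obtain ⟨a, ha, hu, hdual⟩ := exists_shear_family_of_codisjoint hσ hm hv₀ hA hcod hβ
  refine ⟨fun i => a i + m v₀ (β i), ?_⟩
  -- The shear with parameter `t` maps `x j - u j` to `x j` as soon as `σ (u i) (x j) = -t⁻¹` for
  -- `i = j` and `0` otherwise; at `t = -1` this is solved by `x j = m v₀ (β j)`.
  have htendsto : Tendsto (fun t : 𝕜 => -t⁻¹ - 1) (𝓝 (-1)) (𝓝 0) := by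
    have hinv := (tendsto_inv₀ (neg_ne_zero.2 (one_ne_zero (α := 𝕜)))).neg.sub_const 1
    simpa [inv_neg] using hinv
  have hsolve := eventually_nhds_exists_apply₂_eq_add_smul
    (exists_positionMap_add_eq hm hv₀ hA hcod hβ ha) (0, fun p => if p.1.1 = p.1.2 then 1 else 0)
  filter_upwards [htendsto.eventually hsolve, eventually_ne_nhds (neg_ne_zero.2 one_ne_zero)]
    with t ⟨v, b, hvb⟩ ht
  have hpos : positionMap σ m A (fun i => a i + m v₀ (β i)) v b =
      (fun j => A.mkQ (a j + m v₀ (β j)), fun p => if p.1.1 = p.1.2 then -t⁻¹ else 0) := by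
    rw [hvb]
    refine Prod.ext (funext fun j => ?_) (funext fun p => ?_)
    · simp [positionMap, ha]
    · simp only [positionMap, LinearMap.mk₂_apply, hdual, Prod.snd_add, Prod.smul_mk, Pi.add_apply,
        Pi.smul_apply]
      split_ifs <;> simp
  have hiso (i j : ι) : σ (m v (b i)) (m v (b j)) = 0 := by
    rcases eq_or_ne v 0 with rfl | hv
    · simp
    · exact (hm v hv).apply_eq_zero ⟨_, rfl⟩ ⟨_, rfl⟩
  obtain ⟨hsub, hpair⟩ := apply_eq_of_positionMap_eq hσ hA hu hiso hpos
  refine ⟨v, ?_, card_le_finrank_map_shear_inf hσ hu (fun j => LinearMap.mem_range_self _ (b j))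
    hsub fun i j => ?_⟩
  · rintro rfl
    obtain ⟨i⟩ := ‹Nonempty ι›
    simpa [ht] using hpair i i
  · rw [hpair]
    split_ifs <;> simp [ht]

variable [IsAlgClosed 𝕜]

theorem exists_card_le_finrank_inf_range_of_disjoint (hσ : σ.IsAlt) (hnd : σ.Nondegenerate)
    (hm : ∀ v ≠ 0, IsLagrangian σ (LinearMap.range (m v))) (hv₀ : v₀ ≠ 0)
    (hβ : ∀ S : ι → ι → 𝕜, ∃ w, ∀ i j, i ≤ j → σ (m v₀ (β i)) (m w (β j)) = S i j)
    (hA : IsLagrangian σ A) (hdisj : Disjoint A (LinearMap.range (m v₀))) :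
    ∃ v ≠ 0, Fintype.card ι ≤ Module.finrank 𝕜 ↥(A ⊓ LinearMap.range (m v)) := by
  by_contra! hlt
  obtain ⟨u, hu⟩ := exists_eventually_card_le_finrank_map_shear_inf hσ hm hv₀
    (fun _ hx _ hy => hA.apply_eq_zero hx hy) (hA.isCompl (hm v₀ hv₀) hnd hdisj).codisjoint hβ
  have hgood : ∀ᶠ t in 𝓝[≠] (-1), ∀ v ≠ 0,
      Module.finrank 𝕜 ↥(A.map (shear σ u t) ⊓ LinearMap.range (m v)) < Fintype.card ι :=
    nhdsNE_le_cofinite _ (eventually_forall_finrank_map_inf_range_lt hm hlt)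
  obtain ⟨t, ⟨v, hv, hle⟩, ht⟩ := ((hu.filter_mono nhdsWithin_le_nhds).and hgood).exists
  exact hle.not_gt (ht v hv)

theorem exists_card_le_finrank_inf_range (hσ : σ.IsAlt) (hnd : σ.Nondegenerate)
    (hm : ∀ v ≠ 0, IsLagrangian σ (LinearMap.range (m v))) (hv₀ : v₀ ≠ 0)
    (hβ : ∀ S : ι → ι → 𝕜, ∃ w, ∀ i j, i ≤ j → σ (m v₀ (β i)) (m w (β j)) = S i j)
    (hA : IsLagrangian σ A) :
    ∃ v ≠ 0, Fintype.card ι ≤ Module.finrank 𝕜 ↥(A ⊓ LinearMap.range (m v)) := by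
  induction h : A ⊓ LinearMap.range (m v₀) using WellFoundedLT.induction generalizing A with
  | ind I ih =>
    subst h
    by_cases hdisj : Disjoint A (LinearMap.range (m v₀))
    · exact exists_card_le_finrank_inf_range_of_disjoint hσ hnd hm hv₀ hβ hA hdisj
    by_contra! hlt
    obtain ⟨u, hu⟩ := exists_map_shear_inf_lt hnd (fun _ hx _ hy => hA.apply_eq_zero hx hy)
      (fun _ hx _ hy => (hm v₀ hv₀).apply_eq_zero hx hy) hdisj
    obtain ⟨t, hgood, ht⟩ := ((eventually_forall_finrank_map_inf_range_lt hm hlt).and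
      (Set.finite_singleton (0 : 𝕜)).compl_mem_cofinite).exists
    obtain ⟨v, hv, hle⟩ := ih _ (hu t ht)
      (hA.map hnd (apply_shear_shear hσ (fun _ _ => hσ u) t)) rfl
    exact hle.not_gt (hgood v hv)

end NontriviallyNormedField

end LagrangianFamily

section ExteriorAlgebra

section CommRing

variable {R M : Type*} [CommRing R] [AddCommGroup M] [Module R M] {m n : ℕ}
  {x y : ExteriorAlgebra R M}

theorem ι_mul_mem_exteriorPower (v : M) (hx : x ∈ ⋀[R]^n M) : ι R v * x ∈ ⋀[R]^(n + 1) M := by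
  rw [exteriorPower, pow_succ']
  exact Submodule.mul_mem_mul ⟨v, rfl⟩ hx

theorem ι_mul_ι_swap (v w : M) : ι R v * ι R w = -(ι R w * ι R v) :=
  eq_neg_of_add_eq_zero_left (ι_add_mul_swap v w)

theorem ι_mul_eq_smul_mul_ι (v : M) (hx : x ∈ ⋀[R]^n M) :
    ι R v * x = (-1 : R) ^ n • (x * ι R v) := by
  induction hx using Submodule.pow_induction_on_left' with
  | algebraMap r => simp [Algebra.commutes]
  | add x y i hx hy ihx ihy => rw [mul_add, ihx, ihy, add_mul, smul_add]
  | mem_mul a ha i x _ ih =>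
    obtain ⟨w, rfl⟩ := ha
    rw [← mul_assoc, ι_mul_ι_swap, neg_mul, mul_assoc, ih, mul_smul_comm, mul_assoc,
      Nat.succ_eq_add_one, pow_succ, mul_neg_one, neg_smul]

theorem mul_eq_smul_mul_of_mem_exteriorPower (hx : x ∈ ⋀[R]^m M) (hy : y ∈ ⋀[R]^n M) :
    x * y = (-1 : R) ^ (m * n) • (y * x) := by
  induction hx using Submodule.pow_induction_on_left' with
  | algebraMap r => simp [Algebra.commutes]
  | add x z i hx hz ihx ihz => rw [add_mul, ihx, ihz, mul_add, smul_add]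
  | mem_mul a ha i x _ ih =>
    obtain ⟨w, rfl⟩ := ha
    rw [mul_assoc, ih, mul_smul_comm, ← mul_assoc, ι_mul_eq_smul_mul_ι w hy, smul_mul_assoc,
      smul_smul, mul_assoc, Nat.succ_eq_add_one, add_one_mul, pow_add]

theorem ι_mul_mul_ι_mul_eq_zero (v : M) (hx : x ∈ ⋀[R]^n M) (y : ExteriorAlgebra R M) :
    ι R v * x * (ι R v * y) = 0 := by
  rw [ι_mul_eq_smul_mul_ι v hx, smul_mul_assoc, mul_assoc, ← mul_assoc (ι R v), ι_sq_zero, zero_mul,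
    mul_zero, smul_zero]

theorem exists_ι_mul_eq_of_ι_mul_eq_zero {v : M} {d : Module.Dual R M} (hd : d v = 1)
    (hx : x ∈ ⋀[R]^(n + 1) M) (hvx : ι R v * x = 0) : ∃ y ∈ ⋀[R]^n M, ι R v * y = x := by
  have hcontract : ι R v * CliffordAlgebra.contractLeft (Q := 0) d x = x := by
    have h := CliffordAlgebra.contractLeft_ι_mul (Q := 0) d v x
    change CliffordAlgebra.contractLeft (Q := 0) d (ι R v * x) = _ at h
    rw [hvx, map_zero, hd, one_smul] at h
    exact (sub_eq_zero.1 h.symm).symm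
  have hv : ι R v ∈ ⋀[R]^1 M := by
    rw [exteriorPower, pow_one]
    exact ⟨v, rfl⟩
  refine ⟨DirectSum.decompose (fun i => ⋀[R]^i M)
    (CliffordAlgebra.contractLeft (Q := 0) d x) n, SetLike.coe_mem _, ?_⟩
  rw [← DirectSum.coe_decompose_mul_add_of_left_mem (fun i => ⋀[R]^i M) hv, hcontract, add_comm 1,
    DirectSum.decompose_of_mem_same (fun i => ⋀[R]^i M) hx]

theorem ιMulti_basis_ne_zero [Nontrivial R] (b : Module.Basis (Fin n) R M) :
    ExteriorAlgebra.ιMulti R n b ≠ 0 := by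
  intro h
  have hdet := exteriorPower.pairingDual_ιMulti_ιMulti b.coord b
  rw [show exteriorPower.ιMulti R n b = 0 from Subtype.ext h, map_zero] at hdet
  have hone : Matrix.of (fun i j => b.coord j (b i)) = 1 := by
    ext i j
    simp [Matrix.one_apply, Finsupp.single_apply]
  rw [hone, Matrix.det_one] at hdet
  exact zero_ne_one hdet

theorem eq_zero_of_forall_mul_eq_zero [StrongRankCondition R] [Module.Free R M] [Module.Finite R M]
    (hmn : m + n = Module.finrank R M) (hx : x ∈ ⋀[R]^n M)
    (h : ∀ y ∈ ⋀[R]^m M, y * x = 0) : x = 0 := by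
  let b := Module.finBasis R M
  have hcard : m + n = Fintype.card (Fin (Module.finrank R M)) := by simpa using hmn
  suffices ∀ s, (b.exteriorPower n).repr ⟨x, hx⟩ s = 0 by
    have hrepr : (b.exteriorPower n).repr ⟨x, hx⟩ = 0 := Finsupp.ext this
    exact congrArg Subtype.val ((b.exteriorPower n).repr.map_eq_zero_iff.1 hrepr)
  intro s
  let sc := Set.powersetCard.compl hcard s
  have hdisj : Disjoint sc.val s.val := disjoint_compl_left
  have hother (t : Set.powersetCard (Fin (Module.finrank R M)) n) (hts : t ≠ s) :
      b.ExteriorAlgebra sc * b.ExteriorAlgebra t = 0 := by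
    refine ExteriorAlgebra.basis_mul_of_not_disjoint b sc t fun hst => hts (Subtype.ext ?_)
    refine Finset.eq_of_subset_of_card_le ?_ (by rw [t.2, s.2])
    exact disjoint_compl_left_iff.1 hst
  have hsc : b.ExteriorAlgebra sc ∈ ⋀[R]^m M := by
    rw [ExteriorAlgebra.basis_eq_coe_basis]
    exact SetLike.coe_mem _
  have hmul := h _ hsc
  rw [show x = ((⟨x, hx⟩ : ⋀[R]^n M) : ExteriorAlgebra R M) from rfl,
    ← (b.exteriorPower n).sum_repr ⟨x, hx⟩] at hmul
  simp only [AddSubmonoidClass.coe_finsetSum, SetLike.val_smul, Finset.mul_sum, mul_smul_comm,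
    ← ExteriorAlgebra.basis_eq_coe_basis] at hmul
  rw [Finset.sum_eq_single s (fun t _ hts => by rw [hother t hts, smul_zero]) (by simp),
    ExteriorAlgebra.basis_mul_of_disjoint b sc s hdisj, smul_comm, smul_eq_zero_iff_eq] at hmul
  simpa using congrArg (b.ExteriorAlgebra.coord (Set.powersetCard.disjUnion hdisj)) hmul

-- With `e₀` divided out, `β₀²`, `β₀β₁` and `β₁²` are, up to scalars, the basis vectors of `⋀⁴` that
-- omit `e₅`, `e₁` and `e₄` respectively, which is why `w` separates the three products.
theorem ι_mul_mul_ι_mul_eq_smul_ιMulti (e : Fin 6 → M) (r s t : R) :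
    letI w := r • e 5 + s • e 1 + t • e 4
    letI β₀ := ι R (e 1) * ι R (e 2) + ι R (e 3) * ι R (e 4)
    letI β₁ := ι R (e 1) * ι R (e 3) + ι R (e 2) * ι R (e 5)
    ι R (e 0) * β₀ * (ι R w * β₀) = (2 * r) • ExteriorAlgebra.ιMulti R 6 e ∧
    ι R (e 0) * β₀ * (ι R w * β₁) = s • ExteriorAlgebra.ιMulti R 6 e ∧
    ι R (e 0) * β₁ * (ι R w * β₁) = (2 * t) • ExteriorAlgebra.ιMulti R 6 e := by
  have htop : ExteriorAlgebra.ιMulti R 6 e =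
      ι R (e 0) * (ι R (e 1) * (ι R (e 2) * (ι R (e 3) * (ι R (e 4) * ι R (e 5))))) := by
    rw [ExteriorAlgebra.ιMulti_apply]
    simp only [List.ofFn_succ, List.ofFn_zero, List.prod_cons, List.prod_nil, mul_one]
    rfl
  have hsq (i : Fin 6) (x : ExteriorAlgebra R M) : ι R (e i) * (ι R (e i) * x) = 0 := by
    rw [← mul_assoc, ι_sq_zero, zero_mul]
  have hswap (i j : Fin 6) (_ : j < i) : ι R (e i) * ι R (e j) = -(ι R (e j) * ι R (e i)) :=
    ι_mul_ι_swap _ _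
  have hswap' (i j : Fin 6) (x : ExteriorAlgebra R M) (_ : j < i) :
      ι R (e i) * (ι R (e j) * x) = -(ι R (e j) * (ι R (e i) * x)) := by
    rw [← mul_assoc, ι_mul_ι_swap, neg_mul, mul_assoc]
  rw [htop]
  refine ⟨?_, ?_, ?_⟩
  all_goals
    simp only [map_add, map_smul, mul_add, add_mul, smul_mul_assoc, mul_smul_comm, mul_assoc, hsq,
      ι_sq_zero, hswap, hswap', Fin.reduceLT, mul_neg, neg_neg, smul_neg, mul_zero, smul_zero,
      neg_zero, add_zero, zero_add]
  all_goals module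

/-- The wedge product `v ↦ (β ↦ v ∧ β)`, as a bilinear map `M × ⋀ⁿM → ⋀ⁿ⁺¹M`. -/
noncomputable def wedgeLeft (R M : Type*) [CommRing R] [AddCommGroup M] [Module R M] (n : ℕ) :
    M →ₗ[R] ⋀[R]^n M →ₗ[R] ⋀[R]^(n + 1) M :=
  LinearMap.mk₂ R (fun v β => ⟨ι R v * β, ι_mul_mem_exteriorPower v β.2⟩)
    (fun _ _ _ => Subtype.ext (by simp [add_mul])) (fun _ _ _ => Subtype.ext (by simp))
    (fun _ _ _ => Subtype.ext (by simp [mul_add])) (fun _ _ _ => Subtype.ext (by simp))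

theorem map_subtype_range_wedgeLeft (v : M) :
    (LinearMap.range (wedgeLeft R M n v)).map (⋀[R]^(n + 1) M).subtype =
      (⋀[R]^n M).map (LinearMap.mulLeft R (ι R v)) := by
  ext x
  constructor
  · rintro ⟨_, ⟨β, rfl⟩, rfl⟩
    exact ⟨β, β.2, rfl⟩
  · rintro ⟨β, hβ, rfl⟩
    exact ⟨_, ⟨⟨β, hβ⟩, rfl⟩, rfl⟩

/-- The form `(x, y) ↦ vol (x ∧ y)` on `⋀ⁿM`. -/
noncomputable def wedgeForm (vol : ExteriorAlgebra R M →ₗ[R] R) (n : ℕ) :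
    LinearMap.BilinForm R (⋀[R]^n M) :=
  ((LinearMap.mul R (ExteriorAlgebra R M)).compl₁₂ (⋀[R]^n M).subtype (⋀[R]^n M).subtype).compr₂ vol

end CommRing

section Field

variable {K V : Type*} [Field K] [AddCommGroup V] [Module K V] {n : ℕ}
  {vol : ExteriorAlgebra K V →ₗ[K] K}

theorem isAlt_wedgeForm [NeZero (2 : K)] (hn : Odd n) : (wedgeForm vol n).IsAlt := by
  intro x
  have h := congrArg vol (mul_eq_smul_mul_of_mem_exteriorPower x.2 x.2)
  rw [(hn.mul hn).neg_one_pow, neg_one_smul, map_neg, eq_neg_iff_add_eq_zero, ← two_mul] at h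
  exact (mul_eq_zero.1 h).resolve_left two_ne_zero

theorem vol_ιMulti_basis_ne_zero (hvol : ∀ z ∈ ⋀[K]^(Module.finrank K V) V, vol z = 0 → z = 0)
    (b : Module.Basis (Fin n) K V) : vol (ExteriorAlgebra.ιMulti K n b) ≠ 0 := by
  have hV : Module.finrank K V = n := by simpa using Module.finrank_eq_card_basis b
  rw [hV] at hvol
  exact fun h => ιMulti_basis_ne_zero b (hvol _ (exteriorPower.ιMulti K n b).2 h)

theorem exists_forall_wedgeForm_wedgeLeft_eq [NeZero (2 : K)] (b : Module.Basis (Fin 6) K V)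
    (hvol : ∀ z ∈ ⋀[K]^(Module.finrank K V) V, vol z = 0 → z = 0) :
    ∃ β : Fin 2 → ⋀[K]^2 V, ∀ S : Fin 2 → Fin 2 → K, ∃ w, ∀ i j, i ≤ j →
      wedgeForm vol 3 (wedgeLeft K V 2 (b 0) (β i)) (wedgeLeft K V 2 w (β j)) = S i j := by
  have hmem (i j : Fin 6) : ι K (b i) * ι K (b j) ∈ ⋀[K]^2 V := by
    rw [exteriorPower, pow_two]
    exact Submodule.mul_mem_mul ⟨_, rfl⟩ ⟨_, rfl⟩
  refine ⟨![⟨_, add_mem (hmem 1 2) (hmem 3 4)⟩, ⟨_, add_mem (hmem 1 3) (hmem 2 5)⟩], fun S => ?_⟩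
  have hc := vol_ιMulti_basis_ne_zero hvol b
  set c := vol (ExteriorAlgebra.ιMulti K 6 b)
  have h2 : (2 : K) ≠ 0 := two_ne_zero
  obtain ⟨h₀₀, h₀₁, h₁₁⟩ := ι_mul_mul_ι_mul_eq_smul_ιMulti b (S 0 0 / (2 * c)) (S 0 1 / c)
    (S 1 1 / (2 * c))
  have hvol_smul {z : ExteriorAlgebra K V} {r : K} (hz : z = r • ExteriorAlgebra.ιMulti K 6 b) :
      vol z = r * c := by
    rw [hz, map_smul, smul_eq_mul]
  refine ⟨(S 0 0 / (2 * c)) • b 5 + (S 0 1 / c) • b 1 + (S 1 1 / (2 * c)) • b 4,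
    fun i j hij => ?_⟩
  fin_cases i <;> fin_cases j
  · exact (hvol_smul h₀₀).trans (by field_simp; rfl)
  · exact (hvol_smul h₀₁).trans (by field_simp; rfl)
  · exact absurd hij (by decide)
  · exact (hvol_smul h₁₁).trans (by field_simp; rfl)

variable [FiniteDimensional K V]

theorem eq_zero_of_forall_vol_mul_eq_zero
    (hvol : ∀ z ∈ ⋀[K]^(Module.finrank K V) V, vol z = 0 → z = 0) {m : ℕ}
    (hmn : m + n = Module.finrank K V) {x : ExteriorAlgebra K V} (hx : x ∈ ⋀[K]^n V)
    (h : ∀ y ∈ ⋀[K]^m V, vol (y * x) = 0) : x = 0 :=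
  eq_zero_of_forall_mul_eq_zero hmn hx fun y hy =>
    hvol _ (hmn ▸ SetLike.mul_mem_graded hy hx) (h y hy)

theorem nondegenerate_wedgeForm [NeZero (2 : K)]
    (hvol : ∀ z ∈ ⋀[K]^(Module.finrank K V) V, vol z = 0 → z = 0)
    (hV : n + n = Module.finrank K V) (hn : Odd n) : (wedgeForm vol n).Nondegenerate := by
  have hrefl : LinearMap.IsRefl (wedgeForm vol n) := (isAlt_wedgeForm hn).isRefl
  refine hrefl.nondegenerate_iff_separatingRight.2 ?_
  intro x hx
  exact Subtype.ext (eq_zero_of_forall_vol_mul_eq_zero hvol hV x.2 fun y hy => hx ⟨y, hy⟩)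

theorem isLagrangian_range_wedgeLeft
    (hvol : ∀ z ∈ ⋀[K]^(Module.finrank K V) V, vol z = 0 → z = 0)
    (hV : (n + 1) + (n + 1) = Module.finrank K V) {v : V} (hv : v ≠ 0) :
    IsLagrangian (wedgeForm vol (n + 1)) (LinearMap.range (wedgeLeft K V n v)) := by
  ext x
  rw [LinearMap.BilinForm.mem_orthogonal_iff]
  constructor
  · intro hx
    have hvx : ι K v * x = 0 := by
      refine eq_zero_of_forall_vol_mul_eq_zero hvol (m := n) (by omega)
        (ι_mul_mem_exteriorPower v x.2) fun β hβ => ?_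
      have h : vol (ι K v * β * x) = 0 := hx _ ⟨⟨β, hβ⟩, rfl⟩
      rw [ι_mul_eq_smul_mul_ι v hβ, smul_mul_assoc, map_smul, mul_assoc] at h
      exact (smul_eq_zero.1 h).resolve_left (pow_ne_zero _ (neg_ne_zero.2 one_ne_zero))
    obtain ⟨d, hd⟩ := Module.Projective.exists_dual_eq_one K hv
    obtain ⟨β, hβ, hvβ⟩ := exists_ι_mul_eq_of_ι_mul_eq_zero hd x.2 hvx
    exact ⟨⟨β, hβ⟩, Subtype.ext hvβ⟩
  · rintro ⟨β, rfl⟩ _ ⟨γ, rfl⟩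
    change vol (ι K v * γ * (ι K v * β)) = 0
    rw [ι_mul_mul_ι_mul_eq_zero v γ.2, map_zero]

end Field

end ExteriorAlgebra

theorem stmt17_general {𝕜 V : Type*} [NontriviallyNormedField 𝕜] [CompleteSpace 𝕜]
    [IsAlgClosed 𝕜] [NeZero (2 : 𝕜)] [AddCommGroup V] [Module 𝕜 V] (hV : Module.finrank 𝕜 V = 6)
    {vol : ExteriorAlgebra 𝕜 V →ₗ[𝕜] 𝕜} (hvol : Function.Injective fun x : ⋀[𝕜]^6 V => vol x)
    {A : Submodule 𝕜 (ExteriorAlgebra 𝕜 V)} (hA3 : A ≤ ⋀[𝕜]^3 V)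
    (hA10 : Module.finrank 𝕜 A = 10) (hAlag : ∀ x ∈ A, ∀ y ∈ A, vol (x * y) = 0) :
    ∃ v : V, v ≠ 0 ∧
      2 ≤ Module.finrank 𝕜 ↥(A ⊓ (⋀[𝕜]^2 V).map (LinearMap.mulLeft 𝕜 (ι 𝕜 v))) := by
  have : FiniteDimensional 𝕜 V := Module.finite_of_finrank_pos (by omega)
  have hvol' : ∀ z ∈ ⋀[𝕜]^(Module.finrank 𝕜 V) V, vol z = 0 → z = 0 := by
    rw [hV]
    exact fun z hz h => congrArg Subtype.val (@hvol ⟨z, hz⟩ 0 (h.trans (map_zero vol).symm))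
  have hodd : Odd 3 := by decide
  have hmap : (A.comap (⋀[𝕜]^3 V).subtype).map (⋀[𝕜]^3 V).subtype = A := by
    rw [Submodule.map_comap_subtype, inf_eq_right.2 hA3]
  have hA : IsLagrangian (wedgeForm vol 3) (A.comap (⋀[𝕜]^3 V).subtype) := by
    refine isLagrangian_of_two_mul_finrank_eq (nondegenerate_wedgeForm hvol' (by omega) hodd)
      (fun x hx y hy => hAlag x hx y hy) ?_
    rw [← Submodule.finrank_map_subtype_eq, hmap, hA10, exteriorPower.finrank_eq, hV]
    rfl
  let b := Module.finBasisOfFinrankEq 𝕜 V hV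
  obtain ⟨β, hβ⟩ := exists_forall_wedgeForm_wedgeLeft_eq b hvol'
  obtain ⟨v, hv, hle⟩ := exists_card_le_finrank_inf_range (isAlt_wedgeForm hodd)
    (nondegenerate_wedgeForm hvol' (by omega) hodd)
    (fun v hv => isLagrangian_range_wedgeLeft hvol' (by omega) hv) (b.ne_zero 0) hβ hA
  refine ⟨v, hv, ?_⟩
  rwa [Fintype.card_fin, ← Submodule.finrank_map_subtype_eq,
    Submodule.map_inf _ Subtype.val_injective, hmap, map_subtype_range_wedgeLeft] at hle

/-- For every Lagrangian subspace `A` of `(⋀³V, σ)` there is a nonzero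
`v ∈ V` with `dim(A ∩ F_v) ≥ 2`; i.e. the locus `W_A` is never empty. -/
theorem stmt17 (V : Type*) [AddCommGroup V] [Module ℂ V] [FiniteDimensional ℂ V]
    (hV : Module.finrank ℂ V = 6)
    (vol : ExteriorAlgebra ℂ V →ₗ[ℂ] ℂ)
    (hvol : Function.Bijective fun x : ⋀[ℂ]^6 V => vol x)
    (A : Submodule ℂ (ExteriorAlgebra ℂ V))
    (hA3 : A ≤ ⋀[ℂ]^3 V) (hA10 : Module.finrank ℂ A = 10)
    (hAlag : ∀ x ∈ A, ∀ y ∈ A, vol (x * y) = 0) :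
    ∃ v : V, v ≠ 0 ∧ 2 ≤ Module.finrank ℂ ↥(A ⊓ Fsub v) :=
  stmt17_general hV hvol.injective hA3 hA10 hAlag
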